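/- arXiv:0804.2715 — 2 statements merged into one kernel-verified Lean document; each statement's English description precedes it below -/
import Mathlib

section
/- For every real number x > 0, the integral ∫₀^∞ t⁻² e^{-t² - x²/t²} dt converges and x · ∫₀^∞ t⁻² e^{-t² - x²/t²} dt = (√π / 2) · e^{-2x}. -/
open MeasureTheory Real Set

theorem stmt_1 (x : ℝ) (hx : 0 < x) :
    IntegrableOn (fun t : ℝ => t⁻¹ ^ 2 * Real.exp (-t ^ 2 - x ^ 2 / t ^ 2)) (Ioi 0) ∧
    x * ∫ t in Ioi (0 : ℝ), t⁻¹ ^ 2 * Real.exp (-t ^ 2 - x ^ 2 / t ^ 2)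
      = (Real.sqrt Real.pi / 2) * Real.exp (-2 * x) := by
  set g : ℝ → ℝ := fun t => Real.exp (-t ^ 2 - x ^ 2 / t ^ 2) with hg
  have hgm : Measurable g := by fun_prop
  -- first substitution u = t - x / t
  have hd1 : ∀ t ∈ Ioi (0 : ℝ),
      HasDerivWithinAt (fun t : ℝ => t - x * t⁻¹) (1 + x * t⁻¹ ^ 2) (Ioi 0) t := by
    intro t ht
    have ht0 : t ≠ 0 := ne_of_gt ht
    have h := ((hasDerivAt_id t).sub ((hasDerivAt_inv ht0).const_mul x)).hasDerivWithinAt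
      (s := Ioi 0)
    refine h.congr_deriv ?_
    field_simp
    ring
  have hi1 : InjOn (fun t : ℝ => t - x * t⁻¹) (Ioi 0) := by
    intro a ha b hb hab
    have ha' : 0 < a := ha
    have hb' : 0 < b := hb
    simp only at hab
    field_simp at hab
    have h : (a - b) * (a * b + x) = 0 := by linear_combination hab
    rcases mul_eq_zero.1 h with h | h
    · linarith
    · have := mul_pos ha' hb'
      linarith
  have him1 : (fun t : ℝ => t - x * t⁻¹) '' (Ioi 0) = univ := by
    refine eq_univ_of_forall fun u => ?_
    have hs := Real.sq_sqrt (show 0 ≤ u ^ 2 + 4 * x by positivity)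
    have hlt : |u| < √(u ^ 2 + 4 * x) := by
      apply Real.lt_sqrt_of_sq_lt
      rw [sq_abs]
      linarith
    have hpos : 0 < u + √(u ^ 2 + 4 * x) := by
      linarith [neg_abs_le u]
    refine ⟨(u + √(u ^ 2 + 4 * x)) / 2, by simp only [mem_Ioi]; linarith, ?_⟩
    simp only
    field_simp
    linear_combination hs
  have hI := integrableOn_image_iff_integrableOn_abs_deriv_smul measurableSet_Ioi hd1 hi1
    (fun u => Real.exp (-1 * u ^ 2))
  have hE := integral_image_eq_integral_abs_deriv_smul measurableSet_Ioi hd1 hi1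
    (fun u => Real.exp (-1 * u ^ 2))
  rw [him1, integrableOn_univ] at hI
  rw [him1, Measure.restrict_univ, integral_gaussian, div_one] at hE
  have key : ∀ t ∈ Ioi (0 : ℝ),
      |1 + x * t⁻¹ ^ 2| • Real.exp (-1 * (t - x * t⁻¹) ^ 2)
        = Real.exp (2 * x) * (g t + x * (t⁻¹ ^ 2 * g t)) := by
    intro t ht
    have ht0 : 0 < t := ht
    have h1 : -1 * (t - x * t⁻¹) ^ 2 = 2 * x + (-t ^ 2 - x ^ 2 / t ^ 2) := by
      field_simp
      ring
    rw [abs_of_pos (by positivity), h1, Real.exp_add, smul_eq_mul]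
    simp only [hg]
    ring
  have hI' := (integrableOn_congr_fun key measurableSet_Ioi).1
    (hI.1 (integrable_exp_neg_mul_sq one_pos))
  rw [setIntegral_congr_fun measurableSet_Ioi key, integral_const_mul] at hE
  have hI2 : IntegrableOn (fun t => g t + x * (t⁻¹ ^ 2 * g t)) (Ioi 0) := by
    have := hI'.const_mul (Real.exp (2 * x))⁻¹
    refine this.congr (Filter.Eventually.of_forall fun t => ?_)
    simp only
    rw [inv_mul_cancel_left₀ (Real.exp_pos _).ne']
  have hA : IntegrableOn g (Ioi 0) := by
    refine Integrable.mono' hI2 hgm.aestronglyMeasurable (Filter.Eventually.of_forall fun t => ?_)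
    have h0 : 0 < g t := Real.exp_pos _
    rw [Real.norm_of_nonneg h0.le]
    have : 0 ≤ x * (t⁻¹ ^ 2 * g t) := by positivity
    linarith
  have hB : IntegrableOn (fun t => x * (t⁻¹ ^ 2 * g t)) (Ioi 0) := by
    refine (hI2.sub hA).congr (Filter.Eventually.of_forall fun t => ?_)
    simp
  have hC : IntegrableOn (fun t => t⁻¹ ^ 2 * g t) (Ioi 0) := by
    refine (hB.const_mul x⁻¹).congr (Filter.Eventually.of_forall fun t => ?_)
    simp only
    rw [inv_mul_cancel_left₀ hx.ne']
  refine ⟨hC, ?_⟩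
  -- second substitution t ↦ x / t
  have hd2 : ∀ t ∈ Ioi (0 : ℝ),
      HasDerivWithinAt (fun t : ℝ => x * t⁻¹) (-(x * t⁻¹ ^ 2)) (Ioi 0) t := by
    intro t ht
    have ht0 : t ≠ 0 := ne_of_gt ht
    have h := ((hasDerivAt_inv ht0).const_mul x).hasDerivWithinAt (s := Ioi 0)
    refine h.congr_deriv ?_
    field_simp
  have hi2 : InjOn (fun t : ℝ => x * t⁻¹) (Ioi 0) := by
    intro a _ b _ hab
    exact inv_injective (mul_left_cancel₀ hx.ne' hab)
  have him2 : (fun t : ℝ => x * t⁻¹) '' (Ioi 0) = Ioi 0 := by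
    ext u
    constructor
    · rintro ⟨t, ht, rfl⟩
      have ht0 : 0 < t := ht
      simp only [mem_Ioi]
      positivity
    · intro hu
      have hu0 : 0 < u := hu
      refine ⟨x * u⁻¹, by simp only [mem_Ioi]; positivity, ?_⟩
      simp only
      field_simp
  have hE2 := integral_image_eq_integral_abs_deriv_smul measurableSet_Ioi hd2 hi2 g
  have key2 : ∀ t ∈ Ioi (0 : ℝ),
      |-(x * t⁻¹ ^ 2)| • g (x * t⁻¹) = x * (t⁻¹ ^ 2 * g t) := by
    intro t ht
    have ht0 : 0 < t := ht
    have h1 : g (x * t⁻¹) = g t := by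
      simp only [hg]
      congr 1
      field_simp
      ring
    rw [abs_neg, abs_of_pos (by positivity), h1, smul_eq_mul]
    ring
  rw [him2, setIntegral_congr_fun measurableSet_Ioi key2, integral_const_mul] at hE2
  rw [integral_add hA hB, integral_const_mul, hE2] at hE
  have hexp : Real.exp (-2 * x) * Real.exp (2 * x) = 1 := by
    rw [← Real.exp_add]
    simp
  change x * (∫ t in Ioi (0 : ℝ), t⁻¹ ^ 2 * g t) = _
  generalize (∫ t in Ioi (0 : ℝ), t⁻¹ ^ 2 * g t) = J at hE ⊢
  linear_combination (-Real.exp (-2 * x) / 2) * hE - x * J * hexp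
end

section
/- Let l and z be positive real numbers. Then (1/√(4π)) · ∫₀^∞ y^{-3/2} e^{-z² y - l²/(4y)} dy = e^{-l z} / l. -/
open MeasureTheory Real Set

lemma cs_aux (a b : ℝ) (ha : 0 < a) (hb : 0 < b) :
    ∫ t in Ioi (0 : ℝ), Real.exp (-(a * t - b / t) ^ 2) = √π / (2 * a) := by
  have himg : (fun t : ℝ => a * t - b / t) '' Ioi 0 = univ := by
    refine eq_univ_of_forall fun u => ?_
    have h0 : 0 ≤ u ^ 2 + 4 * a * b := by positivity
    have hs := Real.sq_sqrt h0
    have hlt : |u| < √(u ^ 2 + 4 * a * b) := by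
      apply Real.lt_sqrt_of_sq_lt
      rw [sq_abs]
      have : 0 < 4 * a * b := by positivity
      linarith
    have hpos : 0 < u + √(u ^ 2 + 4 * a * b) := by
      have := neg_abs_le u
      linarith
    set s := √(u ^ 2 + 4 * a * b)
    refine ⟨(u + s) / (2 * a), mem_Ioi.2 (by positivity), ?_⟩
    have hne := hpos.ne'
    simp only
    field_simp
    nlinarith
  have hinj : InjOn (fun t : ℝ => a * t - b / t) (Ioi 0) := by
    intro s hs t ht h
    have hs : 0 < s := hs
    have ht : 0 < t := ht
    simp only at h
    have h2 : (s - t) * (a * (s * t) + b) = 0 := by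
      field_simp at h
      linarith
    rcases mul_eq_zero.1 h2 with h3 | h3
    · linarith
    · have : 0 < a * (s * t) + b := by positivity
      linarith
  have hder : ∀ t ∈ Ioi (0 : ℝ), HasDerivWithinAt (fun t : ℝ => a * t - b / t)
      (a + b / t ^ 2) (Ioi 0) t := by
    intro t ht
    have ht : 0 < t := ht
    have h1 := ((hasDerivAt_id t).const_mul a).sub ((hasDerivAt_inv ht.ne').const_mul b)
    refine (HasDerivAt.congr_deriv h1 ?_).hasDerivWithinAt
    field_simp
    ring
  have habs : ∀ t : ℝ, |a + b / t ^ 2| = a + b / t ^ 2 := fun t => abs_of_pos (by positivity)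
  have hgi : IntegrableOn (fun u : ℝ => Real.exp (-u ^ 2)) univ := by
    rw [integrableOn_univ]
    simpa using integrable_exp_neg_mul_sq (b := 1) one_pos
  have hg : ∫ u in (univ : Set ℝ), Real.exp (-u ^ 2) = √π := by
    rw [setIntegral_univ]
    simpa using integral_gaussian 1
  have hI := (integrableOn_image_iff_integrableOn_abs_deriv_smul measurableSet_Ioi hder hinj
    (fun u : ℝ => Real.exp (-u ^ 2)))
  have hE := (integral_image_eq_integral_abs_deriv_smul measurableSet_Ioi hder hinj
    (fun u : ℝ => Real.exp (-u ^ 2)))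
  rw [himg] at hI hE
  rw [hg] at hE
  have hI := hI.1 hgi
  simp only [habs, smul_eq_mul] at hI hE
  have hP : IntegrableOn (fun t : ℝ => a * Real.exp (-(a * t - b / t) ^ 2)) (Ioi 0) := by
    refine Integrable.mono' hI (by fun_prop) (Filter.Eventually.of_forall fun t => ?_)
    rw [Real.norm_of_nonneg (by positivity)]
    gcongr
    have : 0 ≤ b / t ^ 2 := by positivity
    linarith
  have hQ : IntegrableOn (fun t : ℝ => b / t ^ 2 * Real.exp (-(a * t - b / t) ^ 2)) (Ioi 0) := by
    refine (hI.sub hP).congr (Filter.Eventually.of_forall fun t => ?_)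
    simp only [Pi.sub_apply]
    ring
  have hsum : √π = (∫ t in Ioi (0 : ℝ), a * Real.exp (-(a * t - b / t) ^ 2)) +
      ∫ t in Ioi (0 : ℝ), b / t ^ 2 * Real.exp (-(a * t - b / t) ^ 2) := by
    rw [hE, ← integral_add hP hQ]
    congr 1
    ext t
    ring
  have himg2 : (fun t : ℝ => (b / a) * t⁻¹) '' Ioi 0 = Ioi 0 := by
    ext u
    constructor
    · rintro ⟨t, ht, rfl⟩
      have ht : 0 < t := ht
      exact mem_Ioi.2 (by positivity)
    · intro hu
      have hu : 0 < u := hu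
      refine ⟨(b / a) * u⁻¹, mem_Ioi.2 (by positivity), ?_⟩
      simp only
      field_simp
  have hinj2 : InjOn (fun t : ℝ => (b / a) * t⁻¹) (Ioi 0) := by
    intro s hs t ht h
    have h' := mul_left_cancel₀ (by positivity) h
    exact inv_injective h'
  have hder2 : ∀ t ∈ Ioi (0 : ℝ), HasDerivWithinAt (fun t : ℝ => (b / a) * t⁻¹)
      ((b / a) * (-(t ^ 2)⁻¹)) (Ioi 0) t := by
    intro t ht
    exact ((hasDerivAt_inv (ne_of_gt ht)).const_mul (b / a)).hasDerivWithinAt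
  have hE2 := (integral_image_eq_integral_abs_deriv_smul measurableSet_Ioi hder2 hinj2
    (fun t : ℝ => a * Real.exp (-(a * t - b / t) ^ 2)))
  rw [himg2] at hE2
  have hE3 : (∫ t in Ioi (0 : ℝ), a * Real.exp (-(a * t - b / t) ^ 2)) =
      ∫ t in Ioi (0 : ℝ), b / t ^ 2 * Real.exp (-(a * t - b / t) ^ 2) := by
    rw [hE2]
    refine setIntegral_congr_fun measurableSet_Ioi fun t ht => ?_
    have ht : 0 < t := ht
    have e1 : |b / a * -(t ^ 2)⁻¹| = b / a * (t ^ 2)⁻¹ := by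
      rw [mul_neg, abs_neg, abs_of_pos (by positivity)]
    have e2 : a * (b / a * t⁻¹) - b / (b / a * t⁻¹) = -(a * t - b / t) := by
      field_simp
      ring
    simp only [smul_eq_mul]
    rw [e1, e2, neg_sq]
    field_simp
  rw [← hE3, integral_const_mul] at hsum
  rw [hsum]
  field_simp
  ring

theorem stmt_3 (l z : ℝ) (hl : 0 < l) (hz : 0 < z) :
    (1 / Real.sqrt (4 * Real.pi)) *
      ∫ y in Ioi (0 : ℝ), y ^ (-(3 : ℝ) / 2) * Real.exp (-z ^ 2 * y - l ^ 2 / (4 * y))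
      = Real.exp (-l * z) / l := by
  have key := integral_comp_rpow_Ioi
    (fun t : ℝ => 2 * Real.exp (-l * z) * Real.exp (-(l / 2 * t - z / t) ^ 2))
    (p := -(1 / 2 : ℝ)) (by norm_num)
  rw [integral_const_mul, cs_aux (l / 2) z (by positivity) hz] at key
  have h1 : ∫ y in Ioi (0 : ℝ), y ^ (-(3 : ℝ) / 2) * Real.exp (-z ^ 2 * y - l ^ 2 / (4 * y)) =
      2 * Real.exp (-l * z) * (√π / (2 * (l / 2))) := by
    rw [← key]
    refine setIntegral_congr_fun measurableSet_Ioi fun y hy => ?_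
    have hy : 0 < y := hy
    have e0 : y ^ (-(1 / 2 : ℝ)) = (√y)⁻¹ := by
      rw [Real.rpow_neg hy.le, Real.sqrt_eq_rpow]
    have hs : 0 < √y := Real.sqrt_pos.2 hy
    have e1 : |(-(1 / 2 : ℝ))| = 1 / 2 := by norm_num
    have e2 : (-(1 / 2 : ℝ)) - 1 = -3 / 2 := by norm_num
    have e3 : -z ^ 2 * y - l ^ 2 / (4 * y) =
        -l * z + -(l / 2 * (√y)⁻¹ - z / (√y)⁻¹) ^ 2 := by
      have hq : y = √y ^ 2 := (Real.sq_sqrt hy.le).symm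
      generalize √y = s at hq hs
      subst hq
      field_simp
      ring
    simp only [smul_eq_mul]
    rw [e0, e1, e2, e3, Real.exp_add]
    ring
  rw [h1, Real.sqrt_mul (by norm_num), show √(4 : ℝ) = 2 by
    rw [show (4 : ℝ) = 2 ^ 2 by norm_num]; exact Real.sqrt_sq (by norm_num)]
  have : 0 < √π := Real.sqrt_pos.2 Real.pi_pos
  field_simp
end
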